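/- The metric space (X̂, d̂) is compact if and only if (X, d) is proper, i.e. every closed bounded subset of X is compact. -/

import Mathlib

open Metric Set MeasureTheory Filter
open scoped ENNReal NNReal

noncomputable section

variable {X : Type*}

/-- The quasimetric `d_a` on the sphericalization `X̂ = X ∪ {∞}`, with `none` playing
the role of the point `∞`. -/
noncomputable def sphDist [MetricSpace X] (a : X) : Option X → Option X → ℝ
  | some x, some y => dist x y / ((1 + dist x a) * (1 + dist y a))
  | some x, none => 1 / (1 + dist x a)
  | none, some y => 1 / (1 + dist y a)
  | none, none => 0

/-- The sum `Σ_{j=1}^k d_a(x_{j-1}, x_j)` along a finite sequence (list) in `X̂`. -/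
noncomputable def chainSum [MetricSpace X] (a : X) : List (Option X) → ℝ
  | [] => 0
  | [_] => 0
  | x :: y :: l => sphDist a x y + chainSum a (y :: l)

/-- The sphericalized distance `d̂(x,y) = inf Σ_{j=1}^k d_a(x_{j-1},x_j)`, the infimum
being taken over all finite sequences `x = x_0, x_1, …, x_k = y` in `X̂`. -/
noncomputable def sphHatDist [MetricSpace X] (a : X) (x y : Option X) : ℝ :=
  sInf {s : ℝ | ∃ L : List (Option X),
    L.head? = some x ∧ L.getLast? = some y ∧ chainSum a L = s}

/-- `d̂(x) = d̂(x,∞) = 1/(1+|x|)` for `x ∈ X`. -/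
noncomputable def sphD [MetricSpace X] (a x : X) : ℝ := 1 / (1 + dist x a)

/-!
The comparison `d_a / 4 ≤ d̂ ≤ d_a` lets one replace the chain metric `d̂` by the explicit `d_a`.
For the lower bound let `h = d_a(·, ∞)` and `M = max (h x) (h y)`, so that `d_a x y ≤ 2 * M`.
A chain through `x` and `y` that reaches a point with `h < M / 2` has length at least `M / 2`,
because `h` is `1`-Lipschitz for `d_a`. On a chain that does not, `d_a` is at least
`(M / 2) ^ 2 * d`, so the chain has length at least `(M / 2) ^ 2 * d x y ≥ d_a x y / 4`.

A sequence with `h → 0` converges to `∞`. Any other sequence has a subsequence with `h` bounded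
below, that is, in a closed ball of `X`, and near a point of `X` convergence for `d_a` is
convergence for `d`.
-/

section Quasimetric

variable [MetricSpace X] (a : X)

theorem sphDist_nonneg (x y : Option X) : 0 ≤ sphDist a x y := by
  rcases x with _ | x <;> rcases y with _ | y <;> simp only [sphDist] <;> positivity

theorem sphDist_comm (x y : Option X) : sphDist a x y = sphDist a y x := by
  rcases x with _ | x <;> rcases y with _ | y <;> simp only [sphDist, dist_comm, mul_comm]

theorem sphD_pos (x : X) : 0 < sphD a x := by
  unfold sphD
  positivity

theorem sphDist_none_none : sphDist a none none = 0 := rfl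

theorem sphDist_some_none (x : X) : sphDist a (some x) none = sphD a x := rfl

theorem sphDist_some_some (x y : X) :
    sphDist a (some x) (some y) = sphD a x * sphD a y * dist x y := by
  simp only [sphDist, sphD]
  field

theorem sphDist_some_some_le_dist (x y : X) : sphDist a (some x) (some y) ≤ dist x y := by
  refine div_le_self dist_nonneg (one_le_mul_of_one_le_of_one_le ?_ ?_) <;> simp

theorem sphDist_some_some_le_add (x y : X) :
    sphDist a (some x) (some y) ≤ sphD a x + sphD a y := by
  calc dist x y / ((1 + dist x a) * (1 + dist y a))
      ≤ ((1 + dist y a) + (1 + dist x a)) / ((1 + dist x a) * (1 + dist y a)) := by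
        gcongr
        linarith [dist_triangle_right x y a]
    _ = sphD a x + sphD a y := by
        simp only [sphD]
        field

theorem dist_sphDist_none_le (x y : Option X) :
    dist (sphDist a x none) (sphDist a y none) ≤ sphDist a x y := by
  rcases x with _ | x <;> rcases y with _ | y
  · exact (dist_self _).le
  · rw [sphDist_none_none, sphDist_comm a none, sphDist_some_none, dist_zero_left,
      Real.norm_of_nonneg (sphD_pos a y).le]
  · rw [sphDist_none_none, sphDist_some_none, dist_zero_right,
      Real.norm_of_nonneg (sphD_pos a x).le]
  · have hsub : sphD a x - sphD a y = sphD a x * sphD a y * (dist y a - dist x a) := by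
      simp only [sphD]
      field
    rw [sphDist_some_none, sphDist_some_none, sphDist_some_some, Real.dist_eq, hsub, abs_mul,
      abs_of_pos (mul_pos (sphD_pos a x) (sphD_pos a y)), dist_comm x y]
    exact mul_le_mul_of_nonneg_left (abs_dist_sub_le y x a)
      (mul_pos (sphD_pos a x) (sphD_pos a y)).le

variable {a}

theorem sq_mul_dist_getD_le_sphDist {m : ℝ} (hm : 0 < m) {x y : Option X}
    (hx : m ≤ sphDist a x none) (hy : m ≤ sphDist a y none) :
    m ^ 2 * dist (x.getD a) (y.getD a) ≤ sphDist a x y := by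
  rcases x with _ | x
  · exact absurd hx hm.not_ge
  rcases y with _ | y
  · exact absurd hy hm.not_ge
  rw [sphDist_some_none] at hx hy
  rw [sphDist_some_some, sq]
  exact mul_le_mul_of_nonneg_right (mul_le_mul hx hy hm.le (sphD_pos a x).le) dist_nonneg

theorem le_sphDist_none_iff {ε : ℝ} (hε : 0 < ε) {x : Option X} :
    ε ≤ sphDist a x none ↔ ∃ p ∈ closedBall a (1 / ε - 1), x = some p := by
  rcases x with _ | x
  · simp [sphDist, hε]
  · simp [sphDist, le_inv_comm₀ hε (add_pos_of_pos_of_nonneg one_pos dist_nonneg),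
      le_sub_iff_add_le']

theorem dist_le_of_mul_sphDist_le_half {x z : X}
    (h : (1 + dist z a) * sphDist a (some x) (some z) ≤ 1 / 2) :
    dist x z ≤ 2 * (1 + dist z a) ^ 2 * sphDist a (some x) (some z) := by
  set s := (1 + dist z a) * sphDist a (some x) (some z) with hs
  have hs_nonneg : 0 ≤ s := mul_nonneg (by positivity) (sphDist_nonneg a _ _)
  have hdist : dist x z = s * (1 + dist x a) := by
    simp only [hs, sphDist]
    field
  have hself : dist x z ≤ s * (1 + dist z a) + 1 / 2 * dist x z :=
    calc dist x z = s * (1 + dist x a) := hdist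
      _ ≤ s * (1 + (dist x z + dist z a)) := by
        gcongr
        exact dist_triangle x z a
      _ = s * (1 + dist z a) + s * dist x z := by ring
      _ ≤ s * (1 + dist z a) + 1 / 2 * dist x z := by gcongr
  calc dist x z ≤ 2 * (s * (1 + dist z a)) := by linarith
    _ = 2 * (1 + dist z a) ^ 2 * sphDist a (some x) (some z) := by rw [hs]; ring

theorem tendsto_sphDist_some_some_zero_iff {ι : Type*} {l : Filter ι} {v : ι → X} {z : X} :
    Tendsto (fun i => sphDist a (some (v i)) (some z)) l (nhds 0) ↔ Tendsto v l (nhds z) := by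
  rw [tendsto_iff_dist_tendsto_zero (f := v)]
  refine ⟨fun h => ?_, squeeze_zero (fun _ => sphDist_nonneg a _ _)
    fun _ => sphDist_some_some_le_dist a _ _⟩
  have hsmall : ∀ᶠ i in l, (1 + dist z a) * sphDist a (some (v i)) (some z) ≤ 1 / 2 := by
    refine Tendsto.eventually_le_const (v := 0) (by norm_num) ?_
    simpa using h.const_mul (1 + dist z a)
  refine squeeze_zero' (Eventually.of_forall fun _ => dist_nonneg)
    (hsmall.mono fun _ => dist_le_of_mul_sphDist_le_half) ?_
  simpa using h.const_mul (2 * (1 + dist z a) ^ 2)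

end Quasimetric

section ChainMetric

variable [MetricSpace X] {a : X}

theorem chainSum_nonneg (a : X) (L : List (Option X)) : 0 ≤ chainSum a L := by
  induction L with
  | nil => exact le_rfl
  | cons x l ih =>
    cases l with
    | nil => exact le_rfl
    | cons y l => exact add_nonneg (sphDist_nonneg a x y) ih

theorem mul_dist_le_chainSum {Y : Type*} [PseudoMetricSpace Y] {f : Option X → Y} {c : ℝ}
    (hc : 0 ≤ c) {L : List (Option X)}
    (hf : ∀ x ∈ L, ∀ y ∈ L, c * dist (f x) (f y) ≤ sphDist a x y)
    {x y : Option X} (hx : x ∈ L) (hy : y ∈ L) : c * dist (f x) (f y) ≤ chainSum a L := by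
  induction L generalizing x y with
  | nil => exact absurd hx List.not_mem_nil
  | cons u l ih =>
    cases l with
    | nil =>
      obtain rfl := List.mem_singleton.1 hx
      obtain rfl := List.mem_singleton.1 hy
      simp [chainSum]
    | cons v l =>
      have htail : ∀ p ∈ v :: l, ∀ q ∈ v :: l, c * dist (f p) (f q) ≤ chainSum a (v :: l) :=
        fun p hp q hq => ih (fun p hp q hq =>
          hf p (List.mem_cons_of_mem u hp) q (List.mem_cons_of_mem u hq)) hp hq
      have hhead : ∀ q ∈ v :: l, c * dist (f u) (f q) ≤ chainSum a (u :: v :: l) := fun q hq =>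
        calc c * dist (f u) (f q) ≤ c * (dist (f u) (f v) + dist (f v) (f q)) := by
              gcongr
              exact dist_triangle _ _ _
          _ = c * dist (f u) (f v) + c * dist (f v) (f q) := mul_add _ _ _
          _ ≤ sphDist a u v + chainSum a (v :: l) :=
              add_le_add (hf u (by simp) v (by simp)) (htail v (by simp) q hq)
      rcases List.mem_cons.1 hx with rfl | hxl <;> rcases List.mem_cons.1 hy with rfl | hyl
      · simpa only [dist_self, mul_zero] using chainSum_nonneg a (y :: v :: l)
      · exact hhead y hyl
      · exact dist_comm (f x) (f y) ▸ hhead x hxl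
      · exact (htail x hxl y hyl).trans (le_add_of_nonneg_left (sphDist_nonneg a u v))

theorem dist_sphDist_none_le_chainSum {L : List (Option X)} {x y : Option X}
    (hx : x ∈ L) (hy : y ∈ L) :
    dist (sphDist a x none) (sphDist a y none) ≤ chainSum a L := by
  simpa using mul_dist_le_chainSum (f := fun w => sphDist a w none) zero_le_one
    (fun u _ v _ => (one_mul _).trans_le (dist_sphDist_none_le a u v)) hx hy

theorem sphDist_some_some_le_four_mul_chainSum {L : List (Option X)} {x y : X}
    (hx : some x ∈ L) (hy : some y ∈ L) :
    sphDist a (some x) (some y) ≤ 4 * chainSum a L := by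
  set M := max (sphD a x) (sphD a y)
  have hxM : sphD a x ≤ M := le_max_left _ _
  have hyM : sphD a y ≤ M := le_max_right _ _
  have hM : 0 < M := (sphD_pos a x).trans_le hxM
  by_cases hL : ∀ w ∈ L, M / 2 ≤ sphDist a w none
  · have hchain : (M / 2) ^ 2 * dist x y ≤ chainSum a L :=
      mul_dist_le_chainSum (f := fun w => w.getD a) (sq_nonneg _)
        (fun u hu v hv => sq_mul_dist_getD_le_sphDist (half_pos hM) (hL u hu) (hL v hv)) hx hy
    calc sphDist a (some x) (some y) = sphD a x * sphD a y * dist x y := sphDist_some_some a x y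
      _ ≤ M * M * dist x y := by
        gcongr
        exact (sphD_pos a y).le
      _ = 4 * ((M / 2) ^ 2 * dist x y) := by ring
      _ ≤ 4 * chainSum a L := by gcongr
  · push Not at hL
    obtain ⟨w, hw, hwM⟩ := hL
    have hdrop : ∀ p : X, some p ∈ L → sphD a p - sphDist a w none ≤ chainSum a L :=
      fun p hp => (le_abs_self _).trans (dist_sphDist_none_le_chainSum hp hw)
    have hM_le : M ≤ chainSum a L + sphDist a w none :=
      max_le (sub_le_iff_le_add.1 (hdrop x hx)) (sub_le_iff_le_add.1 (hdrop y hy))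
    linarith [sphDist_some_some_le_add a x y]

theorem sphDist_none_le_chainSum {L : List (Option X)} {x : Option X}
    (hx : x ∈ L) (hnone : none ∈ L) : sphDist a x none ≤ chainSum a L := by
  simpa only [sphDist_none_none, Real.dist_eq, sub_zero, abs_of_nonneg (sphDist_nonneg a x none)]
    using dist_sphDist_none_le_chainSum (a := a) hx hnone

theorem sphDist_le_four_mul_chainSum {L : List (Option X)} {x y : Option X}
    (hx : x ∈ L) (hy : y ∈ L) : sphDist a x y ≤ 4 * chainSum a L := by
  have hle : chainSum a L ≤ 4 * chainSum a L := by linarith [chainSum_nonneg a L]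
  rcases y with _ | y
  · exact (sphDist_none_le_chainSum hx hy).trans hle
  rcases x with _ | x
  · exact sphDist_comm a none (some y) ▸ (sphDist_none_le_chainSum hy hx).trans hle
  · exact sphDist_some_some_le_four_mul_chainSum hx hy

theorem sphHatDist_nonneg (a : X) (x y : Option X) : 0 ≤ sphHatDist a x y := by
  refine Real.sInf_nonneg ?_
  rintro _ ⟨L, -, -, rfl⟩
  exact chainSum_nonneg a L

theorem sphHatDist_le_sphDist (a : X) (x y : Option X) : sphHatDist a x y ≤ sphDist a x y := by
  refine csInf_le ⟨0, ?_⟩ ⟨[x, y], by simp, by simp, by simp [chainSum]⟩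
  rintro _ ⟨L, -, -, rfl⟩
  exact chainSum_nonneg a L

theorem sphDist_le_four_mul_sphHatDist (a : X) (x y : Option X) :
    sphDist a x y ≤ 4 * sphHatDist a x y := by
  rw [← div_le_iff₀' four_pos]
  refine le_csInf ⟨_, [x, y], by simp, by simp, rfl⟩ ?_
  rintro _ ⟨L, hx, hy, rfl⟩
  rw [div_le_iff₀' four_pos]
  exact sphDist_le_four_mul_chainSum (List.mem_of_head? hx) (List.mem_of_getLast? hy)

theorem tendsto_sphHatDist_zero_iff {ι : Type*} {l : Filter ι} {u : ι → Option X}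
    {z : Option X} :
    Tendsto (fun i => sphHatDist a (u i) z) l (nhds 0) ↔
      Tendsto (fun i => sphDist a (u i) z) l (nhds 0) := by
  refine ⟨fun h => squeeze_zero (fun i => sphDist_nonneg a _ _)
    (fun i => sphDist_le_four_mul_sphHatDist a _ _) (by simpa using h.const_mul 4), ?_⟩
  exact squeeze_zero (fun i => sphHatDist_nonneg a _ _) fun i => sphHatDist_le_sphDist a _ _

end ChainMetric

section Compactness

variable [MetricSpace X] (a : X)

theorem properSpace_of_forall_exists_subseq_tendsto_sphDist
    (h : ∀ u : ℕ → Option X, ∃ (z : Option X) (φ : ℕ → ℕ), StrictMono φ ∧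
      Tendsto (fun n => sphDist a (u (φ n)) z) atTop (nhds 0)) :
    ProperSpace X := by
  refine .of_seq_closedBall (x := a) tendsto_id
    ((eventually_ge_atTop 0).mono fun r (hr : 0 ≤ r) => IsSeqCompact.isCompact fun v hv => ?_)
  obtain ⟨z, φ, hφ, hlim⟩ := h fun n => some (v n)
  rcases z with _ | z
  · have hε : 0 < 1 / (1 + r) := by positivity
    have hfar : ∀ n, 1 / (1 + r) ≤ sphDist a (some (v (φ n))) none := fun n =>
      (le_sphDist_none_iff hε).2 ⟨v (φ n), by simpa using hv (φ n), rfl⟩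
    exact absurd (ge_of_tendsto' hlim hfar) hε.not_ge
  · have hv_lim : Tendsto (v ∘ φ) atTop (nhds z) := tendsto_sphDist_some_some_zero_iff.1 hlim
    exact ⟨z, isClosed_closedBall.mem_of_tendsto hv_lim (.of_forall fun n => hv (φ n)),
      φ, hφ, hv_lim⟩

theorem exists_subseq_tendsto_sphDist [ProperSpace X] (u : ℕ → Option X) :
    ∃ (z : Option X) (φ : ℕ → ℕ), StrictMono φ ∧
      Tendsto (fun n => sphDist a (u (φ n)) z) atTop (nhds 0) := by
  by_cases hu : ∀ ε > 0, ∀ᶠ n in atTop, sphDist a (u n) none < ε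
  · exact ⟨none, id, strictMono_id, tendsto_order.2
      ⟨fun b hb => .of_forall fun n => hb.trans_le (sphDist_nonneg a _ _), hu⟩⟩
  · push Not at hu
    obtain ⟨ε, hε, hfreq⟩ := hu
    obtain ⟨ψ, hψ, hψε⟩ := extraction_of_frequently_atTop hfreq
    choose v hv huv using fun n => (le_sphDist_none_iff hε).1 (hψε n)
    obtain ⟨z, -, φ, hφ, hlim⟩ := (isCompact_closedBall a (1 / ε - 1)).tendsto_subseq hv
    refine ⟨some z, ψ ∘ φ, hψ.comp hφ, ?_⟩
    simpa only [Function.comp_apply, huv] using tendsto_sphDist_some_some_zero_iff.2 hlim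

theorem statement5_general :
    (∀ u : ℕ → Option X, ∃ (z : Option X) (φ : ℕ → ℕ), StrictMono φ ∧
        Tendsto (fun n => sphHatDist a (u (φ n)) z) atTop (nhds 0)) ↔
      ProperSpace X := by
  simp only [tendsto_sphHatDist_zero_iff]
  exact ⟨properSpace_of_forall_exists_subseq_tendsto_sphDist a,
    fun _ => exists_subseq_tendsto_sphDist a⟩

end Compactness

/-- The metric space `(X̂, d̂)` is compact (expressed here by the
equivalent sequential compactness with respect to the metric `d̂`) if and only if
`(X, d)` is proper, i.e. every closed bounded subset of `X` is compact. -/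
theorem statement5 [MetricSpace X]
    (hX : ¬ Bornology.IsBounded (Set.univ : Set X)) (a : X) :
    (∀ u : ℕ → Option X, ∃ (z : Option X) (φ : ℕ → ℕ), StrictMono φ ∧
        Filter.Tendsto (fun n => sphHatDist a (u (φ n)) z) Filter.atTop (nhds 0)) ↔
      ProperSpace X :=
  statement5_general a
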